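/- arXiv:2206.10864 — 2 statements merged into one kernel-verified Lean document; each statement's English description precedes it below -/
import Mathlib

section
/- Let K be a tetrahedron in ℝ³ with barycentric coordinates λ₁,λ₂,λ₃,λ₄ and bubble function b_K = λ₁λ₂λ₃λ₄. If a vector field v on K belongs to x × P₁(K;ℝ³) + b_K·P₁(K;ℝ³) and curl v = 0 on K, then v = 0. -/
open MeasureTheory
open scoped Classical

noncomputable section

/-! ### Basic vector calculus on ℝ³ -/

abbrev Vec : Type := Fin 3 → ℝ
abbrev Mat : Type := Fin 3 → Fin 3 → ℝ

/-- Euclidean dot product on ℝ³. -/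
def dot3 (v w : Vec) : ℝ := ∑ i, v i * w i
/-- squared Euclidean norm. -/
def nsq3 (v : Vec) : ℝ := dot3 v v
/-- Euclidean norm. -/
def enorm3 (v : Vec) : ℝ := Real.sqrt (dot3 v v)
/-- normalization to a unit vector. -/
def normalize3 (v : Vec) : Vec := (enorm3 v)⁻¹ • v
/-- cross product on ℝ³. -/
def cross3 (v w : Vec) : Vec :=
  ![v 1 * w 2 - v 2 * w 1, v 2 * w 0 - v 0 * w 2, v 0 * w 1 - v 1 * w 0]
/-- Frobenius inner product of 3×3 matrices. -/
def dotM (A B : Mat) : ℝ := ∑ i, ∑ j, A i j * B i j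
/-- squared Frobenius norm. -/
def nsqM (A : Mat) : ℝ := dotM A A

/-- partial derivative ∂ᵢ of a scalar field. -/
def pd (i : Fin 3) (f : Vec → ℝ) (x : Vec) : ℝ := fderiv ℝ f x (Pi.single i 1)
/-- gradient of a scalar field. -/
def grad3 (f : Vec → ℝ) (x : Vec) : Vec := fun i => pd i f x
/-- curl of a vector field. -/
def curl3 (v : Vec → Vec) (x : Vec) : Vec :=
  ![pd 1 (fun y => v y 2) x - pd 2 (fun y => v y 1) x,
    pd 2 (fun y => v y 0) x - pd 0 (fun y => v y 2) x,
    pd 0 (fun y => v y 1) x - pd 1 (fun y => v y 0) x]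
/-- divergence of a vector field. -/
def div3 (v : Vec → Vec) (x : Vec) : ℝ := ∑ i, pd i (fun y => v y i) x
/-- Jacobian matrix of a vector field. -/
def jac3 (v : Vec → Vec) (x : Vec) : Mat := fun i j => pd j (fun y => v y i) x
/-- application of a matrix to a vector (e.g. normal derivative ∂ₙ). -/
def japply (J : Mat) (n : Vec) : Vec := fun i => ∑ j, J i j * n j

/-- iterated partial derivatives along a list of directions. -/
def pdIter : List (Fin 3) → (Vec → ℝ) → Vec → ℝ
  | [], f => f
  | i :: l, f => pd i (pdIter l f)

/-- `f` is (the function of) a polynomial of total degree at most `k`. -/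
def PolyDeg (k : ℕ) (f : Vec → ℝ) : Prop :=
  ∃ p : MvPolynomial (Fin 3) ℝ, p.totalDegree ≤ k ∧ ∀ x, f x = MvPolynomial.eval x p
/-- vector-valued polynomial of total degree at most `k`. -/
def VPolyDeg (k : ℕ) (v : Vec → Vec) : Prop := ∀ i, PolyDeg k fun x => v x i

/-! ### Tetrahedra -/

/-- A (nondegenerate) tetrahedron in ℝ³, given by its four vertices. -/
structure Tetra where
  vtx : Fin 4 → Vec
  indep : AffineIndependent ℝ vtx

namespace Tetra

/-- the tetrahedron as a closed subset of ℝ³. -/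
def K (T : Tetra) : Set Vec := convexHull ℝ (Set.range T.vtx)
/-- the edge joining vertices `i`, `j`. -/
def edge (T : Tetra) (i j : Fin 4) : Set Vec := segment ℝ (T.vtx i) (T.vtx j)
/-- a unit tangent vector of the edge joining vertices `i`, `j`. -/
def tangent (T : Tetra) (i j : Fin 4) : Vec := normalize3 (T.vtx j - T.vtx i)
/-- the face opposite to vertex `i`. -/
def face (T : Tetra) (i : Fin 4) : Set Vec := convexHull ℝ (T.vtx '' {j | j ≠ i})
/-- unit outward normal of the face opposite to vertex `i`. -/
def outNormal (T : Tetra) (i : Fin 4) : Vec :=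
  let a := T.vtx (i.succAbove 0)
  let u := cross3 (T.vtx (i.succAbove 1) - a) (T.vtx (i.succAbove 2) - a)
  (if 0 < dot3 u (T.vtx i - a) then (-1 : ℝ) else 1) • normalize3 u

/-- `lam` is the family of barycentric coordinates of `T`. -/
def IsBary (T : Tetra) (lam : Fin 4 → Vec → ℝ) : Prop :=
  (∀ i, PolyDeg 1 (lam i)) ∧ ∀ i j, lam i (T.vtx j) = if i = j then (1 : ℝ) else 0
/-- `b` is the (quartic) bubble function of `T`. -/
def IsBubble (T : Tetra) (b : Vec → ℝ) : Prop :=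
  ∃ lam, T.IsBary lam ∧ ∀ x, b x = ∏ i, lam i x

end Tetra

/-! ### Local shape function spaces -/

/-- the local space `W_k(K) = ∇P_{k+1}(K) ⊕ x × P₁(K;ℝ³) ⊕ b_K P₁(K;ℝ³)`. -/
def MemW (k : ℕ) (T : Tetra) (v : Vec → Vec) : Prop :=
  ∃ (q : Vec → ℝ) (p r : Vec → Vec) (b : Vec → ℝ), T.IsBubble b ∧
    PolyDeg (k + 1) q ∧ VPolyDeg 1 p ∧ VPolyDeg 1 r ∧
    ∀ x, v x = grad3 q x + cross3 x (p x) + b x • r x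

/-- the local Tai–Winther space `V^d(K) = P₁(K;ℝ³) ⊕ curl(b_K P₁(K;ℝ³))`. -/
def MemVd (T : Tetra) (v : Vec → Vec) : Prop :=
  ∃ (p r : Vec → Vec) (b : Vec → ℝ), T.IsBubble b ∧ VPolyDeg 1 p ∧ VPolyDeg 1 r ∧
    ∀ x, v x = p x + curl3 (fun y => b y • r y) x

/-- the local Nédélec space `V_k^{ND}(K) = ∇P_{k+1}(K) ⊕ x × P₁(K;ℝ³)`, `k = 1,2`. -/
def MemND (k : ℕ) (v : Vec → Vec) : Prop :=
  ∃ (q : Vec → ℝ) (p : Vec → Vec), PolyDeg (k + 1) q ∧ VPolyDeg 1 p ∧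
    ∀ x, v x = grad3 q x + cross3 x (p x)

/-- the face test space `RM_{k-2}(F) = P₀(F;ℝ²) ⊕ x^⊥ P_{k-2}(F)` on the face with
unit normal `n`; for `k = 1` this is just `P₀(F;ℝ²)`. -/
def MemRM (k : ℕ) (n : Vec) (q : Vec → Vec) : Prop :=
  ∃ (a : Vec) (c : ℝ), dot3 a n = 0 ∧ (k ≤ 1 → c = 0) ∧ ∀ x, q x = a + c • cross3 n x

/-- the face test space `RT(F) = P₀(F;ℝ²) ⊕ x P₀(F)` on the face with unit normal `n`. -/
def MemRT (n : Vec) (q : Vec → Vec) : Prop :=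
  ∃ (a : Vec) (c : ℝ), dot3 a n = 0 ∧ ∀ x, q x = a + c • (x - dot3 x n • n)

/-! ### Degrees of freedom -/

/-- edge moment `∫_e (v⋅t) q ds`. -/
def edgeMoment (T : Tetra) (a b : Fin 4) (v : Vec → Vec) (q : Vec → ℝ) : ℝ :=
  ∫ x in T.edge a b, dot3 (v x) (T.tangent a b) * q x ∂μH[1]
/-- tangential face moment `∫_F (v × n)⋅q dS`. -/
def faceTanMoment (T : Tetra) (a : Fin 4) (v : Vec → Vec) (q : Vec → Vec) : ℝ :=
  ∫ x in T.face a, dot3 (cross3 (v x) (T.outNormal a)) (q x) ∂μH[2]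
/-- normal face moment `∫_F (v⋅n) q dS`. -/
def faceNorMoment (T : Tetra) (a : Fin 4) (v : Vec → Vec) (q : Vec → ℝ) : ℝ :=
  ∫ x in T.face a, dot3 (v x) (T.outNormal a) * q x ∂μH[2]
/-- surface integral over a face. -/
def faceInt2 (T : Tetra) (a : Fin 4) (g : Vec → ℝ) : ℝ := ∫ x in T.face a, g x ∂μH[2]
/-- diameter of a face. -/
def hF (T : Tetra) (a : Fin 4) : ℝ := Metric.diam (T.face a)

/-! ### Meshes -/

/-- A face-to-face tetrahedral mesh. -/
structure Mesh where
  n : ℕ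
  npos : 0 < n
  el : Fin n → Tetra
  disj : ∀ i j, i ≠ j → interior (el i).K ∩ interior (el j).K = ∅
  conform : ∀ i j, i ≠ j → ∃ s e : Set (Fin 4),
    (el i).vtx '' s = (el j).vtx '' e ∧ (el i).K ∩ (el j).K = convexHull ℝ ((el i).vtx '' s)

namespace Mesh
/-- the open domain triangulated by the mesh. -/
def domain (M : Mesh) : Set Vec := interior (⋃ i, (M.el i).K)
/-- the mesh triangulates the (connected, polyhedral) domain `Ω`. -/
def Covers (M : Mesh) (Ω : Set Vec) : Prop :=
  Ω = M.domain ∧ closure Ω = (⋃ i, (M.el i).K) ∧ IsConnected Ω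
/-- the mesh size `h`. -/
def hsize (M : Mesh) : ℝ := ⨆ i, Metric.diam (M.el i).K
/-- shape regularity with constant `ρ`. -/
def ShapeReg (ρ : ℝ) (M : Mesh) : Prop :=
  ∀ i, ∃ x, Metric.ball x (ρ * Metric.diam (M.el i).K) ⊆ (M.el i).K
end Mesh

/-- A bounded polyhedral domain: a connected open set triangulated by some tetrahedral mesh. -/
def PolyhedralDomain (Ω : Set Vec) : Prop := ∃ M : Mesh, M.Covers Ω

/-- piecewise vector fields on a mesh (one smooth representative per element). -/
abbrev DiscVF (M : Mesh) := Fin M.n → Vec → Vec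
/-- piecewise scalar fields on a mesh. -/
abbrev DiscSF (M : Mesh) := Fin M.n → Vec → ℝ

/-- elementwise average (the `L²`-projection onto piecewise constants). -/
def avg (M : Mesh) (g : Vec → ℝ) (i : Fin M.n) : ℝ :=
  (∫ x in (M.el i).K, g x) / (volume (M.el i).K).toReal

/-! ### Global finite element spaces -/

/-- the `H(grad curl)`-nonconforming space `W_h`: piecewise `W_k(K)`, all DoFs
single-valued, and the edge DoFs and `RM`-face DoFs vanishing on `∂Ω`. -/
def MemWh (k : ℕ) (M : Mesh) (Ω : Set Vec) (u : DiscVF M) : Prop :=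
  (∀ i, MemW k (M.el i) (u i)) ∧
  (∀ i j a b c d, i ≠ j → (M.el i).edge a b = (M.el j).edge c d →
     ∀ q, PolyDeg k q → edgeMoment (M.el i) a b (u i) q = edgeMoment (M.el i) a b (u j) q) ∧
  (∀ i j a b, i ≠ j → (M.el i).face a = (M.el j).face b →
     ∀ q, MemRM k ((M.el i).outNormal a) q →
       faceTanMoment (M.el i) a (u i) q = faceTanMoment (M.el i) a (u j) q) ∧
  (∀ i j a b, i ≠ j → (M.el i).face a = (M.el j).face b →
     ∀ q, MemRT ((M.el i).outNormal a) q →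
       faceTanMoment (M.el i) a (curl3 (u i)) q = faceTanMoment (M.el i) a (curl3 (u j)) q) ∧
  (∀ i a b, (M.el i).edge a b ⊆ frontier Ω →
     ∀ q, PolyDeg k q → edgeMoment (M.el i) a b (u i) q = 0) ∧
  (∀ i a, (M.el i).face a ⊆ frontier Ω →
     ∀ q, MemRM k ((M.el i).outNormal a) q → faceTanMoment (M.el i) a (u i) q = 0)

/-- the space `W_{h0}`: all DoFs, including the curl-trace face DoFs, vanish on `∂Ω`. -/
def MemWh0 (k : ℕ) (M : Mesh) (Ω : Set Vec) (u : DiscVF M) : Prop :=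
  MemWh k M Ω u ∧
  ∀ i a, (M.el i).face a ⊆ frontier Ω →
    ∀ q, MemRT ((M.el i).outNormal a) q → faceTanMoment (M.el i) a (curl3 (u i)) q = 0

/-- the degree-`(k+1)` Lagrange space with zero boundary trace. -/
def MemVhg (k : ℕ) (M : Mesh) (Ω : Set Vec) (u : DiscSF M) : Prop :=
  (∀ i, PolyDeg (k + 1) (u i)) ∧
  (∀ i j, ∀ x ∈ (M.el i).K ∩ (M.el j).K, u i x = u j x) ∧
  (∀ i, ∀ x ∈ (M.el i).K ∩ frontier Ω, u i x = 0)

/-- the Tai–Winther space `V_h^d`: normal components continuous, tangential `RT`-moments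
single-valued, normal DoFs vanishing on `∂Ω`. -/
def MemVhd (M : Mesh) (Ω : Set Vec) (u : DiscVF M) : Prop :=
  (∀ i, MemVd (M.el i) (u i)) ∧
  (∀ i j a b, i ≠ j → (M.el i).face a = (M.el j).face b →
     (∀ q, PolyDeg 1 q → faceNorMoment (M.el i) a (u i) q = faceNorMoment (M.el i) a (u j) q) ∧
     (∀ q, MemRT ((M.el i).outNormal a) q →
       faceTanMoment (M.el i) a (u i) q = faceTanMoment (M.el i) a (u j) q)) ∧
  (∀ i a, (M.el i).face a ⊆ frontier Ω →
     ∀ q, PolyDeg 1 q → faceNorMoment (M.el i) a (u i) q = 0)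

/-- the Tai–Winther space `V_{h0}^d` with all DoFs vanishing on `∂Ω`. -/
def MemVh0d (M : Mesh) (Ω : Set Vec) (u : DiscVF M) : Prop :=
  MemVhd M Ω u ∧
  ∀ i a, (M.el i).face a ⊆ frontier Ω →
    ∀ q, MemRT ((M.el i).outNormal a) q → faceTanMoment (M.el i) a (u i) q = 0

/-- the piecewise-constant space `𝒬_h` with zero mean. -/
def MemQh (M : Mesh) (q : Fin M.n → ℝ) : Prop :=
  ∑ i, q i * (volume (M.el i).K).toReal = 0

/-- the Nédélec space with vanishing tangential boundary DoFs. -/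
def MemVND (k : ℕ) (M : Mesh) (Ω : Set Vec) (u : DiscVF M) : Prop :=
  (∀ i, MemND k (u i)) ∧
  (∀ i j a b c d, i ≠ j → (M.el i).edge a b = (M.el j).edge c d →
     ∀ q, PolyDeg k q → edgeMoment (M.el i) a b (u i) q = edgeMoment (M.el i) a b (u j) q) ∧
  (∀ i j a b, i ≠ j → (M.el i).face a = (M.el j).face b →
     ∀ q, MemRM k ((M.el i).outNormal a) q →
       faceTanMoment (M.el i) a (u i) q = faceTanMoment (M.el i) a (u j) q) ∧
  (∀ i a b, (M.el i).edge a b ⊆ frontier Ω →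
     ∀ q, PolyDeg k q → edgeMoment (M.el i) a b (u i) q = 0) ∧
  (∀ i a, (M.el i).face a ⊆ frontier Ω →
     ∀ q, MemRM k ((M.el i).outNormal a) q → faceTanMoment (M.el i) a (u i) q = 0)

/-- the lowest-order BDM space with vanishing normal boundary trace. -/
def MemVBDM (M : Mesh) (Ω : Set Vec) (u : DiscVF M) : Prop :=
  (∀ i, VPolyDeg 1 (u i)) ∧
  (∀ i j a b, i ≠ j → (M.el i).face a = (M.el j).face b →
     ∀ x ∈ (M.el i).face a, dot3 (u i x) ((M.el i).outNormal a) = dot3 (u j x) ((M.el i).outNormal a)) ∧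
  (∀ i a, (M.el i).face a ⊆ frontier Ω →
     ∀ x ∈ (M.el i).face a, dot3 (u i x) ((M.el i).outNormal a) = 0)

/-! ### Discrete norms and bilinear forms -/

/-- broken `L²` norm of a piecewise vector field. -/
def L2d (M : Mesh) (w : DiscVF M) : ℝ :=
  Real.sqrt (∑ i, ∫ x in (M.el i).K, nsq3 (w i x))
/-- `L²` norm of the (elementwise) curl. -/
def L2curl (M : Mesh) (w : DiscVF M) : ℝ :=
  Real.sqrt (∑ i, ∫ x in (M.el i).K, nsq3 (curl3 (w i) x))
/-- broken `H¹` seminorm of the curl, `|curl v|_{1,h}`. -/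
def semiCurl (M : Mesh) (w : DiscVF M) : ℝ :=
  Real.sqrt (∑ i, ∫ x in (M.el i).K, nsqM (jac3 (curl3 (w i)) x))
/-- the norm `‖v‖_{ε,h}`. -/
def epsNorm (ε : ℝ) (M : Mesh) (w : DiscVF M) : ℝ :=
  Real.sqrt ((L2d M w) ^ 2 + (L2curl M w) ^ 2 + ε ^ 2 * (semiCurl M w) ^ 2)
/-- broken `H¹` seminorm of a piecewise scalar field. -/
def semiGrad (M : Mesh) (μ : DiscSF M) : ℝ :=
  Real.sqrt (∑ i, ∫ x in (M.el i).K, nsq3 (grad3 (μ i) x))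

/-- `a_h(w,v) = Σ_K (∇curl w, ∇curl v)_K`. -/
def ah (M : Mesh) (w v : DiscVF M) : ℝ :=
  ∑ i, ∫ x in (M.el i).K, dotM (jac3 (curl3 (w i)) x) (jac3 (curl3 (v i)) x)
/-- `b(w,v) = (curl w, curl v)`. -/
def bh (M : Mesh) (w v : DiscVF M) : ℝ :=
  ∑ i, ∫ x in (M.el i).K, dot3 (curl3 (w i) x) (curl3 (v i) x)
/-- `c(v,μ) = (v, ∇μ)`. -/
def ch (M : Mesh) (v : DiscVF M) (μ : DiscSF M) : ℝ :=
  ∑ i, ∫ x in (M.el i).K, dot3 (v i x) (grad3 (μ i) x)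
/-- load functional `(f, v)`. -/
def fpair (M : Mesh) (f : Vec → Vec) (v : DiscVF M) : ℝ :=
  ∑ i, ∫ x in (M.el i).K, dot3 (f x) (v i x)

/-- `a_h(u, v_h)` with a continuous first argument, given by `J = ∇curl u`. -/
def ahC (M : Mesh) (J : Vec → Mat) (v : DiscVF M) : ℝ :=
  ∑ i, ∫ x in (M.el i).K, dotM (J x) (jac3 (curl3 (v i)) x)
/-- `b(u, v_h)` with a continuous first argument, given by `cu = curl u`. -/
def bhC (M : Mesh) (cu : Vec → Vec) (v : DiscVF M) : ℝ :=
  ∑ i, ∫ x in (M.el i).K, dot3 (cu x) (curl3 (v i) x)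

/-- broken `L²` distance between a function and a piecewise field. -/
def errL2 (M : Mesh) (v : Vec → Vec) (w : DiscVF M) : ℝ :=
  Real.sqrt (∑ i, ∫ x in (M.el i).K, nsq3 (v x - w i x))
/-- broken `L²` distance of curls, the first argument given by `cu = curl u`. -/
def errCurl (M : Mesh) (cu : Vec → Vec) (w : DiscVF M) : ℝ :=
  Real.sqrt (∑ i, ∫ x in (M.el i).K, nsq3 (cu x - curl3 (w i) x))
/-- broken `H¹` distance of curls, the first argument given by `J = ∇curl u`. -/
def errSemi (M : Mesh) (J : Vec → Mat) (w : DiscVF M) : ℝ :=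
  Real.sqrt (∑ i, ∫ x in (M.el i).K, nsqM (J x - jac3 (curl3 (w i)) x))
/-- error in the `‖·‖_{ε,h}` norm between `u` (with `curl u = cu`, `∇curl u = J`)
and a piecewise field `w`. -/
def errNorm (ε : ℝ) (M : Mesh) (u cu : Vec → Vec) (J : Vec → Mat) (w : DiscVF M) : ℝ :=
  Real.sqrt ((errL2 M u w) ^ 2 + (errCurl M cu w) ^ 2 + ε ^ 2 * (errSemi M J w) ^ 2)
/-- broken `H¹` distance between a function with Jacobian `J` and a piecewise field. -/
def errJac (M : Mesh) (J : Vec → Mat) (w : DiscVF M) : ℝ :=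
  Real.sqrt (∑ i, ∫ x in (M.el i).K, nsqM (J x - jac3 (w i) x))

/-- sum of a quantity over the boundary faces of the mesh. -/
def bdrySum (M : Mesh) (Ω : Set Vec) (g : Fin M.n → Fin 4 → ℝ) : ℝ :=
  ∑ i, ∑ a, if (M.el i).face a ⊆ frontier Ω then g i a else 0

/-- the boundary part `ε² Σ_{F⊆∂Ω} h_F⁻¹ ‖curl v‖²_F` of the Nitsche norm. -/
def tripExtra (ε : ℝ) (M : Mesh) (Ω : Set Vec) (v : DiscVF M) : ℝ :=
  ε ^ 2 * bdrySum M Ω fun i a =>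
    (hF (M.el i) a)⁻¹ * faceInt2 (M.el i) a fun x => nsq3 (curl3 (v i) x)
/-- the Nitsche norm `|||v|||_{ε,h}`. -/
def tripNorm (ε : ℝ) (M : Mesh) (Ω : Set Vec) (v : DiscVF M) : ℝ :=
  Real.sqrt ((epsNorm ε M v) ^ 2 + tripExtra ε M Ω v)
/-- error in the Nitsche norm `|||·|||_{ε,h}`. -/
def errTrip (ε : ℝ) (M : Mesh) (Ω : Set Vec) (u cu : Vec → Vec) (J : Vec → Mat)
    (w : DiscVF M) : ℝ :=
  Real.sqrt ((errNorm ε M u cu J w) ^ 2 + ε ^ 2 * bdrySum M Ω fun i a =>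
    (hF (M.el i) a)⁻¹ * faceInt2 (M.el i) a fun x => nsq3 (cu x - curl3 (w i) x))

/-- the Nitsche bilinear form `ã_h` on discrete functions. -/
def atildeD (σ : ℝ) (M : Mesh) (Ω : Set Vec) (w v : DiscVF M) : ℝ :=
  ah M w v
  - bdrySum M Ω (fun i a => faceInt2 (M.el i) a fun x =>
      dot3 (japply (jac3 (curl3 (w i)) x) ((M.el i).outNormal a)) (curl3 (v i) x))
  - bdrySum M Ω (fun i a => faceInt2 (M.el i) a fun x =>
      dot3 (curl3 (w i) x) (japply (jac3 (curl3 (v i)) x) ((M.el i).outNormal a)))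
  + bdrySum M Ω (fun i a => (σ / hF (M.el i) a) * faceInt2 (M.el i) a fun x =>
      dot3 (curl3 (w i) x) (curl3 (v i) x))

/-- the Nitsche form `ã_h(u, v_h)` with continuous first argument `u`
(`cu = curl u`, `J = ∇curl u`). -/
def atildeC (σ : ℝ) (M : Mesh) (Ω : Set Vec) (cu : Vec → Vec) (J : Vec → Mat)
    (v : DiscVF M) : ℝ :=
  ahC M J v
  - bdrySum M Ω (fun i a => faceInt2 (M.el i) a fun x =>
      dot3 (japply (J x) ((M.el i).outNormal a)) (curl3 (v i) x))
  - bdrySum M Ω (fun i a => faceInt2 (M.el i) a fun x =>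
      dot3 (cu x) (japply (jac3 (curl3 (v i)) x) ((M.el i).outNormal a)))
  + bdrySum M Ω (fun i a => (σ / hF (M.el i) a) * faceInt2 (M.el i) a fun x =>
      dot3 (cu x) (curl3 (v i) x))
/-! ### Sobolev spaces via weak (distributional) derivatives -/

/-- smooth compactly supported scalar test functions on ℝ³. -/
def TestS (φ : Vec → ℝ) : Prop := ContDiff ℝ (⊤ : ℕ∞) φ ∧ HasCompactSupport φ
/-- smooth compactly supported vector test functions on ℝ³. -/
def TestV (φ : Vec → Vec) : Prop := ContDiff ℝ (⊤ : ℕ∞) φ ∧ HasCompactSupport φ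

/-- extension by zero outside `Ω`. -/
def zextS (Ω : Set Vec) (f : Vec → ℝ) : Vec → ℝ := Ω.indicator f
/-- extension by zero outside `Ω` (vector-valued). -/
def zextV (Ω : Set Vec) (v : Vec → Vec) : Vec → Vec := Ω.indicator v

/-- membership in `L²(Ω)`. -/
def MemL2S (Ω : Set Vec) (f : Vec → ℝ) : Prop := MemLp f 2 (volume.restrict Ω)
/-- membership in `L²(Ω;ℝ³)`. -/
def MemL2V (Ω : Set Vec) (v : Vec → Vec) : Prop := MemLp v 2 (volume.restrict Ω)

/-- `L²(Ω)` norm. -/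
def L2SΩ (Ω : Set Vec) (f : Vec → ℝ) : ℝ := Real.sqrt (∫ x in Ω, (f x) ^ 2)
/-- `L²(Ω;ℝ³)` norm. -/
def L2VΩ (Ω : Set Vec) (v : Vec → Vec) : ℝ := Real.sqrt (∫ x in Ω, nsq3 (v x))

/-- `g = ∂ᵢ f` in the sense of distributions on all of ℝ³. -/
def WkPD (i : Fin 3) (f g : Vec → ℝ) : Prop :=
  ∀ φ, TestS φ → ∫ x, g x * φ x = -∫ x, f x * pd i φ x
/-- `w = curl v` in the sense of distributions on all of ℝ³. -/
def WkCurlAll (v w : Vec → Vec) : Prop :=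
  ∀ φ, TestV φ → ∫ x, dot3 (w x) (φ x) = ∫ x, dot3 (v x) (curl3 φ x)
/-- `d = div v` in the sense of distributions on all of ℝ³. -/
def WkDivAll (v : Vec → Vec) (d : Vec → ℝ) : Prop :=
  ∀ φ, TestS φ → ∫ x, d x * φ x = -∫ x, dot3 (v x) (grad3 φ x)

/-- `g = ∂ᵢ f` in the sense of distributions on `Ω`. -/
def WkPDIn (Ω : Set Vec) (i : Fin 3) (f g : Vec → ℝ) : Prop :=
  ∀ φ, TestS φ → tsupport φ ⊆ Ω → ∫ x in Ω, g x * φ x = -∫ x in Ω, f x * pd i φ x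
/-- `J` is the distributional Jacobian of `v` on `Ω`. -/
def WkJacIn (Ω : Set Vec) (v : Vec → Vec) (J : Vec → Mat) : Prop :=
  ∀ a b, WkPDIn Ω b (fun x => v x a) fun x => J x a b
/-- `g = ∂^α f` (`α` a list of directions) in the sense of distributions on `Ω`. -/
def WkIterIn (Ω : Set Vec) (l : List (Fin 3)) (f g : Vec → ℝ) : Prop :=
  ∀ φ, TestS φ → tsupport φ ⊆ Ω →
    ∫ x in Ω, g x * φ x = (-1 : ℝ) ^ l.length * ∫ x in Ω, f x * pdIter l φ x
/-- `div v = 0` in the sense of distributions on `Ω`. -/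
def WkDivFree (Ω : Set Vec) (v : Vec → Vec) : Prop :=
  ∀ φ, TestS φ → tsupport φ ⊆ Ω → ∫ x in Ω, dot3 (v x) (grad3 φ x) = 0

/-- scalar `H₀¹(Ω)` (via zero extension), with weak gradient `g`. -/
def MemH01S (Ω : Set Vec) (f : Vec → ℝ) (g : Vec → Vec) : Prop :=
  MemL2S Ω f ∧ MemL2V Ω g ∧ ∀ i, WkPD i (zextS Ω f) fun x => zextV Ω g x i
/-- `H₀(curl,Ω)` (via zero extension), with weak curl `cv`. -/
def MemH0Curl (Ω : Set Vec) (v cv : Vec → Vec) : Prop :=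
  MemL2V Ω v ∧ MemL2V Ω cv ∧ WkCurlAll (zextV Ω v) (zextV Ω cv)
/-- `H₀(div,Ω)` (via zero extension), with weak divergence `d`. -/
def MemH0Div (Ω : Set Vec) (v : Vec → Vec) (d : Vec → ℝ) : Prop :=
  MemL2V Ω v ∧ MemL2S Ω d ∧ WkDivAll (zextV Ω v) (zextS Ω d)
/-- vector `H₀¹(Ω;ℝ³)` (via zero extension), with weak Jacobian `J`. -/
def MemH01V (Ω : Set Vec) (v : Vec → Vec) (J : Vec → Mat) : Prop :=
  MemL2V Ω v ∧ (∀ a b, MemL2S Ω fun x => J x a b) ∧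
    ∀ a b, WkPD b (zextS Ω fun x => v x a) (zextS Ω fun x => J x a b)
/-- `H₀(grad curl, Ω)`: `u ∈ H₀(curl)` with `curl u = cu ∈ H₀¹(Ω;ℝ³)`, `J = ∇cu`. -/
def MemH0GC (Ω : Set Vec) (u cu : Vec → Vec) (J : Vec → Mat) : Prop :=
  MemH0Curl Ω u cu ∧ MemH01V Ω cu J

/-- membership in `H^j(Ω)` componentwise via iterated distributional derivatives `D`,
indexed by multi-indices `α : Fin j → Fin 3` and components `c : Fin 3`. -/
def MemHiter (Ω : Set Vec) (j : ℕ) (v : Vec → Vec)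
    (D : (Fin j → Fin 3) → Fin 3 → Vec → ℝ) : Prop :=
  ∀ α c, WkIterIn Ω (List.ofFn α) (fun x => v x c) (D α c) ∧ MemL2S Ω (D α c)
/-- the `H^j(Ω)` seminorm built from the iterated derivatives `D`. -/
def semiIter (Ω : Set Vec) (j : ℕ) (D : (Fin j → Fin 3) → Fin 3 → Vec → ℝ) : ℝ :=
  Real.sqrt (∑ α : Fin j → Fin 3, ∑ c : Fin 3, ∫ x in Ω, (D α c x) ^ 2)
/-- the `H¹(Ω)` seminorm of a vector field with Jacobian `J`. -/
def semiJ (Ω : Set Vec) (J : Vec → Mat) : ℝ := Real.sqrt (∫ x in Ω, nsqM (J x))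

/-- the `H^s(Ω)` seminorm, `1 ≤ s ≤ 2`, of a vector field with Jacobian `J` and second
derivatives `D2`; for `1 < s < 2` the Sobolev–Slobodeckij seminorm of the gradient. -/
def semiHsVec (Ω : Set Vec) (s : ℝ) (J : Vec → Mat)
    (D2 : (Fin 2 → Fin 3) → Fin 3 → Vec → ℝ) : ℝ :=
  if s = 1 then semiJ Ω J
  else if s = 2 then semiIter Ω 2 D2
  else Real.sqrt (∑ a : Fin 3, ∑ b : Fin 3,
    ∫ x in Ω, ∫ y in Ω, (J x a b - J y a b) ^ 2 / dist x y ^ (3 + 2 * (s - 1)))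
/-- membership in `H^s(Ω;ℝ³)`, `1 ≤ s ≤ 2`, with data `(J, D2)`. -/
def MemHsVec (Ω : Set Vec) (s : ℝ) (v : Vec → Vec) (J : Vec → Mat)
    (D2 : (Fin 2 → Fin 3) → Fin 3 → Vec → ℝ) : Prop :=
  WkJacIn Ω v J ∧ (∀ a b, MemL2S Ω fun x => J x a b) ∧
  (s = 2 → MemHiter Ω 2 v D2) ∧
  (1 < s → s < 2 → ∀ a b, Integrable
    (fun p : Vec × Vec => (J p.1 a b - J p.2 a b) ^ 2 / dist p.1 p.2 ^ (3 + 2 * (s - 1)))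
    ((volume.restrict Ω).prod (volume.restrict Ω)))

/-! ### The continuous problems -/

/-- weak solution of the quad-curl singular perturbation problem
`ε² curl⁴u + curl²u = f`, `div u = 0`, `u × n = curl u = 0` on `∂Ω`
(mixed formulation with multiplier `λ = 0`): here `cu = curl u`, `J = ∇curl u`. -/
def IsQuadCurlSol (Ω : Set Vec) (ε : ℝ) (f u cu : Vec → Vec) (J : Vec → Mat) : Prop :=
  MemH0GC Ω u cu J ∧ WkDivFree Ω u ∧
  ∀ v cv Jv, MemH0GC Ω v cv Jv →
    ε ^ 2 * (∫ x in Ω, dotM (J x) (Jv x)) + (∫ x in Ω, dot3 (cu x) (cv x))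
      = ∫ x in Ω, dot3 (f x) (v x)

/-- weak solution of the reduced double curl problem
`curl²u₀ = f`, `div u₀ = 0`, `u₀ × n = 0` on `∂Ω`; here `cu0 = curl u₀`. -/
def IsReducedSol (Ω : Set Vec) (f u0 cu0 : Vec → Vec) : Prop :=
  MemH0Curl Ω u0 cu0 ∧ WkDivFree Ω u0 ∧
  ∀ v cv, MemH0Curl Ω v cv →
    (∫ x in Ω, dot3 (cu0 x) (cv x)) = ∫ x in Ω, dot3 (f x) (v x)

/-- the continuous mixed formulation: `u ∈ H₀(grad curl)`, `λ ∈ H₀¹`,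
`ε²a(u,v) + b(u,v) + c(v,λ) = (f,v)` and `c(u,μ) = 0`. -/
def MixedSol (Ω : Set Vec) (ε : ℝ) (f u cu : Vec → Vec) (J : Vec → Mat)
    (lam : Vec → ℝ) (glam : Vec → Vec) : Prop :=
  MemH0GC Ω u cu J ∧ MemH01S Ω lam glam ∧
  (∀ v cv Jv, MemH0GC Ω v cv Jv →
    ε ^ 2 * (∫ x in Ω, dotM (J x) (Jv x)) + (∫ x in Ω, dot3 (cu x) (cv x))
      + (∫ x in Ω, dot3 (v x) (glam x)) = ∫ x in Ω, dot3 (f x) (v x)) ∧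
  (∀ μ gμ, MemH01S Ω μ gμ → ∫ x in Ω, dot3 (u x) (gμ x) = 0)

/-! ### Discrete methods -/

/-- the mixed finite element method (4.1)-(4.2). -/
def DiscMixedSol (k : ℕ) (M : Mesh) (Ω : Set Vec) (ε : ℝ) (f : Vec → Vec)
    (u : DiscVF M) (lam : DiscSF M) : Prop :=
  MemWh0 k M Ω u ∧ MemVhg k M Ω lam ∧
  (∀ v, MemWh0 k M Ω v → ε ^ 2 * ah M u v + bh M u v + ch M v lam = fpair M f v) ∧
  (∀ μ, MemVhg k M Ω μ → ch M u μ = 0)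

/-- the Nitsche-modified mixed finite element method (5.1)-(5.2). -/
def DiscNitscheSol (k : ℕ) (M : Mesh) (Ω : Set Vec) (σ ε : ℝ) (f : Vec → Vec)
    (u : DiscVF M) (lam : DiscSF M) : Prop :=
  MemWh k M Ω u ∧ MemVhg k M Ω lam ∧
  (∀ v, MemWh k M Ω v →
    ε ^ 2 * atildeD σ M Ω u v + bh M u v + ch M v lam = fpair M f v) ∧
  (∀ μ, MemVhg k M Ω μ → ch M u μ = 0)

/-! ### Falk–Winther projections and derived interpolation operators -/

/-- The Falk–Winther local bounded commuting projections onto the Lagrange, Nédélec and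
BDM spaces, together with the properties used in the paper. `avg` plays the role of the
projection `Q_h` onto piecewise constants. -/
structure FW (k : ℕ) (M : Mesh) (Ω : Set Vec) where
  Ig : (Vec → ℝ) → DiscSF M
  IND : (Vec → Vec) → DiscVF M
  IBDM : (Vec → Vec) → DiscVF M
  mapsIg : ∀ v gv, MemH01S Ω v gv → MemVhg k M Ω (Ig v)
  mapsIND : ∀ v cv, MemH0Curl Ω v cv → MemVND k M Ω (IND v)
  mapsIBDM : ∀ v dv, MemH0Div Ω v dv → MemVBDM M Ω (IBDM v)
  zeroIBDM : ∀ i x, IBDM (fun _ => (0 : Vec)) i x = 0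
  comm_grad : ∀ v gv, MemH01S Ω v gv → ∀ i, ∀ x ∈ (M.el i).K, IND gv i x = grad3 (Ig v i) x
  comm_curl : ∀ v cv, MemH0Curl Ω v cv → ∀ i, ∀ x ∈ (M.el i).K, IBDM cv i x = curl3 (IND v i) x
  comm_div : ∀ v dv, MemH0Div Ω v dv → ∀ i, ∀ x ∈ (M.el i).K, div3 (IBDM v i) x = avg M dv i

/-- DoF-matching conditions defining the interpolations `I_{h0}^d`, `I_h^d` into the
Tai–Winther spaces relative to a given piecewise field `B` (namely `I_h^{BDM}v`): the
normal face DoFs match, and on interior faces the tangential DoFs match the face average. -/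
def MatchIdInt (M : Mesh) (B w : DiscVF M) : Prop :=
  (∀ i a, ∀ q, PolyDeg 1 q → faceNorMoment (M.el i) a (w i) q = faceNorMoment (M.el i) a (B i) q) ∧
  (∀ i j a b, i ≠ j → (M.el i).face a = (M.el j).face b →
    ∀ q, MemRT ((M.el i).outNormal a) q →
      faceTanMoment (M.el i) a (w i) q
        = (faceTanMoment (M.el i) a (B i) q + faceTanMoment (M.el i) a (B j) q) / 2)

/-- `w = I_{h0}^d v` where `B = I_h^{BDM} v`. -/
def IsId0 (M : Mesh) (Ω : Set Vec) (B w : DiscVF M) : Prop :=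
  MemVh0d M Ω w ∧ MatchIdInt M B w

/-- `w = I_h^d v` where `B = I_h^{BDM} v`: additionally the tangential DoFs on boundary
faces match those of `B`. -/
def IsId (M : Mesh) (Ω : Set Vec) (B w : DiscVF M) : Prop :=
  MemVhd M Ω w ∧ MatchIdInt M B w ∧
  ∀ i a, (M.el i).face a ⊆ frontier Ω →
    ∀ q, MemRT ((M.el i).outNormal a) q →
      faceTanMoment (M.el i) a (w i) q = faceTanMoment (M.el i) a (B i) q

/-- DoF-matching conditions defining `I_{h0}^{gc}`, `I_h^{gc}` relative to a given
piecewise field `N` (namely `I_h^{ND}v`). -/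
def MatchIgcInt (k : ℕ) (M : Mesh) (N w : DiscVF M) : Prop :=
  (∀ i a b, a ≠ b → ∀ q, PolyDeg k q →
     edgeMoment (M.el i) a b (w i) q = edgeMoment (M.el i) a b (N i) q) ∧
  (∀ i a, ∀ q, MemRM k ((M.el i).outNormal a) q →
     faceTanMoment (M.el i) a (w i) q = faceTanMoment (M.el i) a (N i) q) ∧
  (∀ i j a b, i ≠ j → (M.el i).face a = (M.el j).face b →
    ∀ q, MemRT ((M.el i).outNormal a) q →
      faceTanMoment (M.el i) a (curl3 (w i)) q
        = (faceTanMoment (M.el i) a (curl3 (N i)) q + faceTanMoment (M.el i) a (curl3 (N j)) q) / 2)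

/-- `w = I_{h0}^{gc} v` where `N = I_h^{ND} v`. -/
def IsIgc0 (k : ℕ) (M : Mesh) (Ω : Set Vec) (N w : DiscVF M) : Prop :=
  MemWh0 k M Ω w ∧ MatchIgcInt k M N w

/-- `w = I_h^{gc} v` where `N = I_h^{ND} v`. -/
def IsIgc (k : ℕ) (M : Mesh) (Ω : Set Vec) (N w : DiscVF M) : Prop :=
  MemWh k M Ω w ∧ MatchIgcInt k M N w ∧
  ∀ i a, (M.el i).face a ⊆ frontier Ω →
    ∀ q, MemRT ((M.el i).outNormal a) q →
      faceTanMoment (M.el i) a (curl3 (w i)) q = faceTanMoment (M.el i) a (curl3 (N i)) q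

/-- `B` maps `H₀(div,Ω)` into the BDM space. -/
def BDMmaps (M : Mesh) (Ω : Set Vec) (B : (Vec → Vec) → DiscVF M) : Prop :=
  ∀ v dv, MemH0Div Ω v dv → MemVBDM M Ω (B v)
/-- the Falk–Winther `L²`-bound `‖I_h^{BDM}v‖₀ ≲ ‖v‖₀ + h‖div v‖₀`. -/
def BDMbound (M : Mesh) (Ω : Set Vec) (B : (Vec → Vec) → DiscVF M) (C₀ : ℝ) : Prop :=
  ∀ v dv, MemH0Div Ω v dv → L2d M (B v) ≤ C₀ * (L2VΩ Ω v + M.hsize * L2SΩ Ω dv)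
/-- the elementwise Falk–Winther error estimates
`Σ_K h_K^{2(i-j)} |v - I_h^{BDM}v|²_{i,K} ≲ |v|_j²` for `i = 0,1`, `j = 1,2`. -/
def BDMest (M : Mesh) (Ω : Set Vec) (B : (Vec → Vec) → DiscVF M) (C₀ : ℝ) : Prop :=
  (∀ v dv Jv, MemH0Div Ω v dv → WkJacIn Ω v Jv →
     (∑ i, (Metric.diam (M.el i).K) ^ (-2 : ℝ) * ∫ x in (M.el i).K, nsq3 (v x - B v i x))
       + (∑ i, ∫ x in (M.el i).K, nsqM (Jv x - jac3 (B v i) x)) ≤ C₀ * (semiJ Ω Jv) ^ 2) ∧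
  (∀ v dv Jv D2, MemH0Div Ω v dv → WkJacIn Ω v Jv → MemHiter Ω 2 v D2 →
     (∑ i, (Metric.diam (M.el i).K) ^ (-4 : ℝ) * ∫ x in (M.el i).K, nsq3 (v x - B v i x))
       + (∑ i, (Metric.diam (M.el i).K) ^ (-2 : ℝ) * ∫ x in (M.el i).K, nsqM (Jv x - jac3 (B v i) x))
       ≤ C₀ * (semiIter Ω 2 D2) ^ 2)

/-! ### Subspaces for the dimension count -/

/-- the subspace `∇P_{k+1}` of vector fields. -/
def gradSpace (k : ℕ) : Submodule ℝ (Vec → Vec) :=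
  Submodule.span ℝ {v | ∃ q, PolyDeg (k + 1) q ∧ v = fun x => grad3 q x}
/-- the subspace `x × P₁(ℝ³;ℝ³)`. -/
def crossSpace : Submodule ℝ (Vec → Vec) :=
  Submodule.span ℝ {v | ∃ p, VPolyDeg 1 p ∧ v = fun x => cross3 x (p x)}
/-- the subspace `b_K P₁(ℝ³;ℝ³)`. -/
def bubbleSpace (T : Tetra) : Submodule ℝ (Vec → Vec) :=
  Submodule.span ℝ {v | ∃ b r, T.IsBubble b ∧ VPolyDeg 1 r ∧ v = fun x => b x • r x}

/-- affine function with given coefficients. -/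
def AF (c : ℝ) (g : Vec) (x : Vec) : ℝ := c + g 0 * x 0 + g 1 * x 1 + g 2 * x 2

lemma polyDeg_one_affine (f : Vec → ℝ) (hf : PolyDeg 1 f) : ∃ c g, ∀ x, f x = AF c g x := by
  obtain ⟨p, hp, hf⟩ := hf
  have key : ∀ s : Finset (Fin 3 →₀ ℕ), (∀ d ∈ s, d 0 + d 1 + d 2 ≤ 1) →
      ∃ c g, ∀ x : Vec, (∑ d ∈ s, p.coeff d * ∏ i, x i ^ d i) = AF c g x := by
    intro s
    induction s using Finset.induction_on with
    | empty => intro _; exact ⟨0, 0, fun x => by simp [AF]⟩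
    | insert a s ha ih =>
      intro h
      obtain ⟨c, g, hc⟩ := ih fun d hd => h d (Finset.mem_insert_of_mem hd)
      have h1 := h a (Finset.mem_insert_self _ _)
      have h2 : ∃ c' g', ∀ x : Vec, p.coeff a * ∏ i, x i ^ a i = AF c' g' x := by
        have : (a 0 = 0 ∧ a 1 = 0 ∧ a 2 = 0) ∨ (a 0 = 1 ∧ a 1 = 0 ∧ a 2 = 0) ∨
          (a 0 = 0 ∧ a 1 = 1 ∧ a 2 = 0) ∨ (a 0 = 0 ∧ a 1 = 0 ∧ a 2 = 1) := by omega
        rcases this with ⟨h0, h1, h2⟩ | ⟨h0, h1, h2⟩ | ⟨h0, h1, h2⟩ | ⟨h0, h1, h2⟩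
        · exact ⟨p.coeff a, 0, fun x => by simp [AF, Fin.prod_univ_three, h0, h1, h2]⟩
        · exact ⟨0, ![p.coeff a, 0, 0], fun x => by simp [AF, Fin.prod_univ_three, h0, h1, h2]⟩
        · exact ⟨0, ![0, p.coeff a, 0], fun x => by simp [AF, Fin.prod_univ_three, h0, h1, h2]⟩
        · exact ⟨0, ![0, 0, p.coeff a], fun x => by simp [AF, Fin.prod_univ_three, h0, h1, h2]⟩
      obtain ⟨c', g', hc'⟩ := h2
      refine ⟨c' + c, g' + g, fun x => ?_⟩
      rw [Finset.sum_insert ha, hc, hc']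
      simp [AF]; ring
  obtain ⟨c, g, h⟩ := key p.support (by
    intro d hd
    have := MvPolynomial.le_totalDegree hd
    rw [Finsupp.sum_fintype _ _ (by simp)] at this
    simp [Fin.sum_univ_three] at this
    omega)
  exact ⟨c, g, fun x => by rw [hf, MvPolynomial.eval_eq', h]⟩

/-- `f` is differentiable at `x` with partial derivatives `d`. -/
def HP (f : Vec → ℝ) (x : Vec) (d : Vec) : Prop :=
  DifferentiableAt ℝ f x ∧ ∀ i, pd i f x = d i

lemma HP.add {f g : Vec → ℝ} {x d e : Vec} (hf : HP f x d) (hg : HP g x e) :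
    HP (fun y => f y + g y) x (fun i => d i + e i) := by
  refine ⟨hf.1.add hg.1, fun i => ?_⟩
  simp only [← hf.2, ← hg.2]
  simp only [pd]
  rw [fderiv_fun_add hf.1 hg.1]; rfl

lemma HP.sub {f g : Vec → ℝ} {x d e : Vec} (hf : HP f x d) (hg : HP g x e) :
    HP (fun y => f y - g y) x (fun i => d i - e i) := by
  refine ⟨hf.1.sub hg.1, fun i => ?_⟩
  simp only [← hf.2, ← hg.2]
  simp only [pd]
  rw [fderiv_fun_sub hf.1 hg.1]; rfl

lemma HP.mul {f g : Vec → ℝ} {x d e : Vec} (hf : HP f x d) (hg : HP g x e) :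
    HP (fun y => f y * g y) x (fun i => f x * e i + g x * d i) := by
  refine ⟨hf.1.mul hg.1, fun i => ?_⟩
  simp only [← hf.2, ← hg.2]
  simp only [pd]
  rw [fderiv_fun_mul hf.1 hg.1]; simp

lemma HP.const (c : ℝ) (x : Vec) : HP (fun _ => c) x (fun _ => 0) := by
  refine ⟨by fun_prop, fun i => ?_⟩
  simp [pd]

lemma HP.coord (j : Fin 3) (x : Vec) : HP (fun y => y j) x (fun i => if j = i then 1 else 0) := by
  refine ⟨by fun_prop, fun i => ?_⟩
  have h : HasFDerivAt (fun y : Vec => y j) (ContinuousLinearMap.proj (R := ℝ) j) x :=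
    (ContinuousLinearMap.proj (R := ℝ) (φ := fun _ : Fin 3 => ℝ) j).hasFDerivAt
  rw [pd, h.fderiv]
  simp [Pi.single_apply]

lemma HP.af (c : ℝ) (g x : Vec) : HP (AF c g) x g := by
  have := (((HP.const c x).add ((HP.const (g 0) x).mul (HP.coord 0 x))).add
    ((HP.const (g 1) x).mul (HP.coord 1 x))).add ((HP.const (g 2) x).mul (HP.coord 2 x))
  refine ⟨this.1, fun i => (this.2 i).trans ?_⟩
  fin_cases i <;> simp

lemma AF_comb (c : ℝ) (g x y : Vec) (s t : ℝ) (h : s + t = 1) :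
    AF c g (s • x + t • y) = s * AF c g x + t * AF c g y := by
  simp [AF]; linear_combination (-c) * h

lemma af_zero_set (T : Tetra) (c : ℝ) (g : Vec) (h : ∀ j, AF c g (T.vtx j) = 0) :
    ∀ x, AF c g x = 0 := by
  let S : AffineSubspace ℝ Vec :=
    { carrier := {x | AF c g x = 0}
      smul_vsub_vadd_mem' := by
        intro t a b d ha hb hd
        simp only [Set.mem_ofPred_eq, AF, vsub_eq_sub, vadd_eq_add, Pi.add_apply, Pi.smul_apply,
          Pi.sub_apply, smul_eq_mul] at *
        linear_combination t * ha - t * hb + hd }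
  have htop : affineSpan ℝ (Set.range T.vtx) = ⊤ := by
    rw [T.indep.affineSpan_eq_top_iff_card_eq_finrank_add_one]
    simp
  have hle : affineSpan ℝ (Set.range T.vtx) ≤ S := by
    rw [affineSpan_le]
    rintro _ ⟨j, rfl⟩
    exact h j
  intro x
  have : x ∈ S := hle (by rw [htop]; trivial)
  exact this

lemma par_lemma (g h w e f : Vec) (hg : cross3 g w = 0) (hh : cross3 h w = 0)
    (h1 : g 0 * e 0 + g 1 * e 1 + g 2 * e 2 = 1) (h2 : g 0 * f 0 + g 1 * f 1 + g 2 * f 2 = 0)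
    (h4 : h 0 * f 0 + h 1 * f 1 + h 2 * f 2 = 1) : w = 0 := by
  have a0 := congrFun hg 0
  have a1 := congrFun hg 1
  have a2 := congrFun hg 2
  have b0 := congrFun hh 0
  have b1 := congrFun hh 1
  have b2 := congrFun hh 2
  simp [cross3] at a0 a1 a2 b0 b1 b2
  set q := w 0 * f 0 + w 1 * f 1 + w 2 * f 2 with hq
  have g0 : q * g 0 = 0 := by rw [hq]; linear_combination w 0 * h2 + f 1 * a2 - f 2 * a1
  have g1 : q * g 1 = 0 := by rw [hq]; linear_combination w 1 * h2 - f 0 * a2 + f 2 * a0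
  have g2 : q * g 2 = 0 := by rw [hq]; linear_combination w 2 * h2 + f 0 * a1 - f 1 * a0
  have q0 : q = 0 := by linear_combination (-q) * h1 + e 0 * g0 + e 1 * g1 + e 2 * g2
  have w0 : w 0 = q * h 0 := by rw [hq]; linear_combination (-w 0) * h4 - f 1 * b2 + f 2 * b1
  have w1 : w 1 = q * h 1 := by rw [hq]; linear_combination (-w 1) * h4 + f 0 * b2 - f 2 * b0
  have w2 : w 2 = q * h 2 := by rw [hq]; linear_combination (-w 2) * h4 - f 0 * b1 + f 1 * b0
  ext i
  fin_cases i <;> simp [w0, w1, w2, q0]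

lemma curl_formula (b : Vec → ℝ) (x db : Vec) (hb : HP b x db)
    (c : Vec) (A : Fin 3 → Vec) (c' : Vec) (A' : Fin 3 → Vec) (v : Vec → Vec)
    (hv : ∀ x, v x = cross3 x (fun i => AF (c i) (A i) x) + b x • fun i => AF (c' i) (A' i) x) :
    curl3 v x = (fun i => (A 0 0 + A 1 1 + A 2 2) * x i - 2 * c i
        - 3 * (A i 0 * x 0 + A i 1 * x 1 + A i 2 * x 2))
      + cross3 db (fun i => AF (c' i) (A' i) x)
      + b x • ![A' 2 1 - A' 1 2, A' 0 2 - A' 2 0, A' 1 0 - A' 0 1] := by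
  have H : ∀ i j k : Fin 3, HP (fun y => y i * AF (c j) (A j) y - y j * AF (c i) (A i) y
      + b y * AF (c' k) (A' k) y) x _ := fun i j k =>
    (((HP.coord i x).mul (HP.af (c j) (A j) x)).sub
      ((HP.coord j x).mul (HP.af (c i) (A i) x))).add (hb.mul (HP.af (c' k) (A' k) x))
  have e0 : (fun y => v y 0) = fun y => y 1 * AF (c 2) (A 2) y - y 2 * AF (c 1) (A 1) y
      + b y * AF (c' 0) (A' 0) y := by
    funext y; rw [hv]; simp [cross3]
  have e1 : (fun y => v y 1) = fun y => y 2 * AF (c 0) (A 0) y - y 0 * AF (c 2) (A 2) y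
      + b y * AF (c' 1) (A' 1) y := by
    funext y; rw [hv]; simp [cross3]
  have e2 : (fun y => v y 2) = fun y => y 0 * AF (c 1) (A 1) y - y 1 * AF (c 0) (A 0) y
      + b y * AF (c' 2) (A' 2) y := by
    funext y; rw [hv]; simp [cross3]
  rw [curl3, e0, e1, e2]
  simp only [(H _ _ _).2]
  ext i
  fin_cases i <;> simp [cross3, AF, Matrix.vecHead, Matrix.vecTail] <;> ring

theorem statement0 (T : Tetra) (lam : Fin 4 → Vec → ℝ) (hlam : T.IsBary lam)
    (p r : Vec → Vec) (hp : VPolyDeg 1 p) (hr : VPolyDeg 1 r)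
    (v : Vec → Vec) (hv : ∀ x, v x = cross3 x (p x) + (∏ i, lam i x) • r x)
    (hcurl : ∀ x ∈ T.K, curl3 v x = 0) :
    ∀ x ∈ T.K, v x = 0 := by
  obtain ⟨hl, hd⟩ := hlam
  choose C G hCG using fun i => polyDeg_one_affine (lam i) (hl i)
  choose c A hcA using fun i => polyDeg_one_affine _ (hp i)
  choose c' A' hcA' using fun i => polyDeg_one_affine _ (hr i)
  have hlamf : ∀ i, lam i = AF (C i) (G i) := fun i => funext (hCG i)
  have hpf : ∀ x, p x = fun i => AF (c i) (A i) x := fun x => funext fun i => hcA i x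
  have hrf : ∀ x, r x = fun i => AF (c' i) (A' i) x := fun x => funext fun i => hcA' i x
  have hd' : ∀ i j, AF (C i) (G i) (T.vtx j) = if i = j then (1 : ℝ) else 0 := fun i j => by
    rw [← hlamf]; exact hd i j
  have hB : ∀ x, HP (fun x => ∏ i, lam i x) x _ := fun x => by
    simp only [Fin.prod_univ_four, hlamf]
    exact (((HP.af (C 0) (G 0) x).mul (HP.af (C 1) (G 1) x)).mul
      (HP.af (C 2) (G 2) x)).mul (HP.af (C 3) (G 3) x)
  have hF := fun x => curl_formula (fun x => ∏ i, lam i x) x _ (hB x) c A c' A' v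
    (fun y => by rw [hv, hpf, hrf])
  have vK : ∀ j, T.vtx j ∈ T.K := fun j => subset_convexHull ℝ _ ⟨j, rfl⟩
  -- curl of the first part vanishes at the vertices
  have hz : ∀ i x, AF (-2 * c i) (fun j => (if i = j then (A 0 0 + A 1 1 + A 2 2) else 0)
      - 3 * A i j) x = 0 := by
    intro i
    apply af_zero_set T
    intro j
    have h1 := congrFun (hcurl _ (vK j)) i
    rw [hF] at h1
    simp only [Fin.prod_univ_four, hlamf, hd'] at h1
    fin_cases j <;> fin_cases i <;> simp [cross3, Matrix.vecHead, Matrix.vecTail] at h1 <;> simp [AF] <;> linarith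
  have hxp : ∀ (i : Fin 3) (x : Vec), (A 0 0 + A 1 1 + A 2 2) * x i - 2 * c i
        - 3 * (A i 0 * x 0 + A i 1 * x 1 + A i 2 * x 2) = 0 := by
    intro i x
    have := hz i x
    rw [← this]
    fin_cases i <;> simp [AF] <;> ring
  have hcz : ∀ i, c i = 0 := fun i => by
    have := hxp i 0
    simp at this; exact this
  have hcross : ∀ x, cross3 x (p x) = 0 := by
    intro x
    rw [hpf]
    have h0 := hxp 0 x
    have h1 := hxp 1 x
    have h2 := hxp 2 x
    rw [hcz] at h0 h1 h2
    ext i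
    fin_cases i <;> simp [cross3, AF, hcz]
    · linear_combination (x 2 * h1 - x 1 * h2) / 3
    · linear_combination (x 0 * h2 - x 2 * h0) / 3
    · linear_combination (x 1 * h0 - x 0 * h1) / 3
  -- second part
  have hface : ∀ i : Fin 4, ∀ x ∈ T.K, AF (C i) (G i) x = 0 →
      (∀ j, j ≠ i → AF (C j) (G j) x ≠ 0) → cross3 (G i) (r x) = 0 := by
    intro i x hx h0 hne
    have h1 := hcurl x hx
    rw [hF, ← hrf] at h1
    have hfirst : (fun i => (A 0 0 + A 1 1 + A 2 2) * x i - 2 * c i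
        - 3 * (A i 0 * x 0 + A i 1 * x 1 + A i 2 * x 2)) = 0 := funext fun i => hxp i x
    rw [hfirst] at h1
    have hk : ∃ k : ℝ, k ≠ 0 ∧ k • cross3 (G i) (r x) = 0 := by
      simp only [Fin.prod_univ_four, hlamf] at h1
      fin_cases i
      · refine ⟨AF (C 1) (G 1) x * AF (C 2) (G 2) x * AF (C 3) (G 3) x,
          mul_ne_zero (mul_ne_zero (hne 1 (by decide)) (hne 2 (by decide))) (hne 3 (by decide)), ?_⟩
        rw [← h1]; simp only [Fin.zero_eta, Fin.mk_one, Fin.reduceFinMk] at h0 ⊢; rw [h0]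
        ext m; fin_cases m <;> simp [cross3] <;> ring
      · refine ⟨AF (C 0) (G 0) x * AF (C 2) (G 2) x * AF (C 3) (G 3) x,
          mul_ne_zero (mul_ne_zero (hne 0 (by decide)) (hne 2 (by decide))) (hne 3 (by decide)), ?_⟩
        rw [← h1]; simp only [Fin.zero_eta, Fin.mk_one, Fin.reduceFinMk] at h0 ⊢; rw [h0]
        ext m; fin_cases m <;> simp [cross3] <;> ring
      · refine ⟨AF (C 0) (G 0) x * AF (C 1) (G 1) x * AF (C 3) (G 3) x,
          mul_ne_zero (mul_ne_zero (hne 0 (by decide)) (hne 1 (by decide))) (hne 3 (by decide)), ?_⟩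
        rw [← h1]; simp only [Fin.zero_eta, Fin.mk_one, Fin.reduceFinMk] at h0 ⊢; rw [h0]
        ext m; fin_cases m <;> simp [cross3] <;> ring
      · refine ⟨AF (C 0) (G 0) x * AF (C 1) (G 1) x * AF (C 2) (G 2) x,
          mul_ne_zero (mul_ne_zero (hne 0 (by decide)) (hne 1 (by decide))) (hne 2 (by decide)), ?_⟩
        rw [← h1]; simp only [Fin.zero_eta, Fin.mk_one, Fin.reduceFinMk] at h0 ⊢; rw [h0]
        ext m; fin_cases m <;> simp [cross3] <;> ring
    obtain ⟨k, hk0, hk⟩ := hk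
    exact (smul_eq_zero.mp hk).resolve_left hk0
  have hcv : Convex ℝ T.K := convex_convexHull ℝ _
  -- the gradient of each barycentric coordinate is parallel to r at vertices of its face
  have hcomb : ∀ i a b d : Fin 4, a ≠ i → b ≠ i → d ≠ i → (∀ j, j ≠ i → j = a ∨ j = b ∨ j = d) →
      cross3 (G i) (r (T.vtx a)) = 0 := by
    intro i a b d ha hb hd0 hall
    let m : Vec := (1/2 : ℝ) • T.vtx b + (1/2 : ℝ) • T.vtx d
    have hm : m ∈ T.K := hcv (vK b) (vK d) (by norm_num) (by norm_num) (by norm_num)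
    have hpt : ∀ s : ℝ, 0 < s → s < 1 →
        cross3 (G i) (r (s • T.vtx a + (1 - s) • m)) = 0 := by
      intro s hs hs1
      have hval : ∀ j, AF (C j) (G j) (s • T.vtx a + (1 - s) • m) =
          s * (if j = a then 1 else 0) + (1 - s) * ((1/2) * (if j = b then 1 else 0)
            + (1/2) * (if j = d then 1 else 0)) := by
        intro j
        rw [AF_comb _ _ _ _ _ _ (by ring), AF_comb _ _ _ _ _ _ (by norm_num), hd', hd', hd']
      apply hface i _ (hcv (vK a) hm hs.le (by linarith) (by ring))
      · rw [hval, if_neg ha.symm, if_neg hb.symm, if_neg hd0.symm]; simp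
      · intro j hj
        rw [hval]
        apply ne_of_gt
        have hs2 : 0 < 1 - s := by linarith
        rcases hall j hj with h | h | h
        · rw [if_pos h]; split_ifs <;> nlinarith
        · rw [if_pos h]; split_ifs <;> nlinarith
        · rw [if_pos h]; split_ifs <;> nlinarith
    have h1 := hpt (1/3) (by norm_num) (by norm_num)
    have h2 := hpt (2/3) (by norm_num) (by norm_num)
    have hr2 : ∀ s : ℝ, r (s • T.vtx a + (1 - s) • m) = s • r (T.vtx a) + (1 - s) • r m := by
      intro s
      simp only [hrf]
      ext k
      rw [AF_comb _ _ _ _ _ _ (by ring)]; simp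
    rw [hr2] at h1 h2
    have h3 : cross3 (G i) (r (T.vtx a)) = (2:ℝ) • cross3 (G i) ((2/3 : ℝ) • r (T.vtx a) + (1 - 2/3 : ℝ) • r m)
        - cross3 (G i) ((1/3 : ℝ) • r (T.vtx a) + (1 - 1/3 : ℝ) • r m) := by
      ext k
      fin_cases k <;> simp [cross3] <;> ring
    rw [h3, h1, h2]; simp
  have hrv : ∀ a, r (T.vtx a) = 0 := by
    have hgen : ∀ a i j k : Fin 4, a ≠ i → a ≠ j → a ≠ k → i ≠ j → i ≠ k → j ≠ k →
        (∀ l, l = a ∨ l = i ∨ l = j ∨ l = k) → r (T.vtx a) = 0 := by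
      intro a i j k hai haj hak hij hik hjk hall
      have h1 := hcomb i a j k hai hij.symm hik.symm (fun l hl => by
        rcases hall l with h | h | h | h <;> tauto)
      have h2 := hcomb j a i k haj hij hjk.symm (fun l hl => by
        rcases hall l with h | h | h | h <;> tauto)
      have e1 := hd' i i
      have e2 := hd' i a
      have e3 := hd' i j
      have e4 := hd' j j
      have e5 := hd' j a
      rw [if_pos rfl] at e1 e4
      rw [if_neg hai.symm] at e2
      rw [if_neg hij] at e3
      rw [if_neg haj.symm] at e5
      simp only [AF] at e1 e2 e3 e4 e5
      refine par_lemma (G i) (G j) _ (T.vtx i - T.vtx a) (T.vtx j - T.vtx a) h1 h2 ?_ ?_ ?_ <;>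
        simp only [Pi.sub_apply] <;> linarith
    intro a
    fin_cases a
    · exact hgen 0 1 2 3 (by decide) (by decide) (by decide) (by decide) (by decide) (by decide) (by decide)
    · exact hgen 1 0 2 3 (by decide) (by decide) (by decide) (by decide) (by decide) (by decide) (by decide)
    · exact hgen 2 0 1 3 (by decide) (by decide) (by decide) (by decide) (by decide) (by decide) (by decide)
    · exact hgen 3 0 1 2 (by decide) (by decide) (by decide) (by decide) (by decide) (by decide) (by decide)
  have hr0 : ∀ x, r x = 0 := by
    intro x
    rw [hrf]
    ext i
    refine af_zero_set T _ _ (fun j => ?_) x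
    have := congrFun (hrv j) i
    rw [hrf] at this
    exact this
  intro x _
  rw [hv, hcross, hr0]; simp
end
end

section
/- Let K be a tetrahedron in ℝ³ with bubble function b_K (the product of the four barycentric coordinates), and for k = 1,2 let W_k(K) := ∇P_{k+1}(K) ⊕ x × P₁(K;ℝ³) ⊕ b_K·P₁(K;ℝ³). Then the kernel of the curl operator restricted to W_k(K) equals ∇P_{k+1}(K), i.e. W_k(K) ∩ ker(curl) = ∇P_{k+1}(K). -/
open MeasureTheory
open scoped Classical

noncomputable section

lemma pd_add' (i : Fin 3) {f g : Vec → ℝ} (hf : Differentiable ℝ f) (hg : Differentiable ℝ g)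
    (x : Vec) : pd i (fun y => f y + g y) x = pd i f x + pd i g x := by
  unfold pd
  rw [fderiv_fun_add (hf x) (hg x)]; simp

lemma pd_sub' (i : Fin 3) {f g : Vec → ℝ} (hf : Differentiable ℝ f) (hg : Differentiable ℝ g)
    (x : Vec) : pd i (fun y => f y - g y) x = pd i f x - pd i g x := by
  unfold pd
  rw [fderiv_fun_sub (hf x) (hg x)]; simp

lemma pd_mul' (i : Fin 3) {f g : Vec → ℝ} (hf : Differentiable ℝ f) (hg : Differentiable ℝ g)
    (x : Vec) : pd i (fun y => f y * g y) x = pd i f x * g x + f x * pd i g x := by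
  unfold pd
  rw [fderiv_fun_mul (hf x) (hg x)]; simp; ring

lemma pd_const' (i : Fin 3) (c : ℝ) (x : Vec) : pd i (fun _ => c) x = 0 := by
  unfold pd; simp

lemma pd_coord (i j : Fin 3) (x : Vec) : pd i (fun y => y j) x = if j = i then 1 else 0 := by
  unfold pd
  have : HasFDerivAt (fun y : Vec => y j) (ContinuousLinearMap.proj (R := ℝ) j) x :=
    (ContinuousLinearMap.proj (R := ℝ) (φ := fun _ : Fin 3 => ℝ) j).hasFDerivAt
  rw [this.fderiv]; simp [Pi.single_apply]

def aff (d : ℝ) (c : Vec) (x : Vec) : ℝ := d + c 0 * x 0 + c 1 * x 1 + c 2 * x 2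

lemma aff_diff (d : ℝ) (c : Vec) : Differentiable ℝ (aff d c) := by
  unfold aff; fun_prop

lemma pd_aff (i : Fin 3) (d : ℝ) (c x : Vec) : pd i (aff d c) x = c i := by
  unfold aff
  rw [pd_add' i (by fun_prop) (by fun_prop), pd_add' i (by fun_prop) (by fun_prop),
    pd_add' i (by fun_prop) (by fun_prop), pd_mul' i (by fun_prop) (by fun_prop),
    pd_mul' i (by fun_prop) (by fun_prop), pd_mul' i (by fun_prop) (by fun_prop)]
  simp only [pd_const', pd_coord]
  fin_cases i <;> simp

lemma polyDeg_aff (d : ℝ) (c : Vec) : PolyDeg 1 (aff d c) := by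
  refine ⟨MvPolynomial.C d + MvPolynomial.C (c 0) * MvPolynomial.X 0
    + MvPolynomial.C (c 1) * MvPolynomial.X 1 + MvPolynomial.C (c 2) * MvPolynomial.X 2, ?_, ?_⟩
  · have h : ∀ i : Fin 3, (MvPolynomial.C (c i) * MvPolynomial.X i :
        MvPolynomial (Fin 3) ℝ).totalDegree ≤ 1 := fun i =>
      (MvPolynomial.totalDegree_mul _ _).trans (by simp)
    refine (MvPolynomial.totalDegree_add _ _).trans (max_le ?_ (h 2))
    refine (MvPolynomial.totalDegree_add _ _).trans (max_le ?_ (h 1))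
    refine (MvPolynomial.totalDegree_add _ _).trans (max_le ?_ (h 0))
    simp
  · intro x; simp [aff]

lemma aff_of_polyDeg {f : Vec → ℝ} (h : PolyDeg 1 f) : ∃ d c, f = aff d c := by
  obtain ⟨p, hp, hf⟩ := h
  refine ⟨p.coeff 0, fun i => p.coeff (Finsupp.single i 1), ?_⟩
  have key : p = MvPolynomial.C (p.coeff 0)
      + ∑ i : Fin 3, MvPolynomial.C (p.coeff (Finsupp.single i 1)) * MvPolynomial.X i := by
    ext m
    by_cases hm : p.coeff m = 0 ∧ m ≠ 0 ∧ ∀ i, m ≠ Finsupp.single i 1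
    · obtain ⟨h0, h1, h2⟩ := hm
      rw [h0]
      simp only [MvPolynomial.coeff_add, MvPolynomial.coeff_C, MvPolynomial.coeff_sum,
        MvPolynomial.coeff_C_mul, MvPolynomial.coeff_X]
      simp [h1.symm, fun i => (h2 i).symm]
    · have hm' : m = 0 ∨ ∃ i, m = Finsupp.single i 1 := by
        by_contra hcon
        push Not at hcon
        apply hm
        refine ⟨?_, hcon.1, hcon.2⟩
        by_contra hc
        have hd := (MvPolynomial.le_totalDegree (MvPolynomial.mem_support_iff.2 hc)).trans hp
        rw [Finsupp.sum_fintype _ _ (fun _ => rfl), Fin.sum_univ_three] at hd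
        have hne : ∃ i, m i ≠ 0 := by
          by_contra h; push Not at h; exact hcon.1 (Finsupp.ext h)
        obtain ⟨i, hi⟩ := hne
        apply hcon.2 i
        ext j
        fin_cases i <;> fin_cases j <;> simp at hi ⊢ <;> omega
      simp only [MvPolynomial.coeff_add, MvPolynomial.coeff_C, MvPolynomial.coeff_sum,
        MvPolynomial.coeff_C_mul, MvPolynomial.coeff_X]
      rcases hm' with rfl | ⟨i, rfl⟩
      · simp
      · have : (0 : Fin 3 →₀ ℕ) ≠ Finsupp.single i 1 := by
          intro h; have := DFunLike.congr_fun h i; simp at this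
        simp [this, Finsupp.single_left_inj]
  funext x
  rw [hf x]
  conv_lhs => rw [key]
  simp [aff, Fin.sum_univ_three]; ring

lemma polyDeg_contDiff {n : ℕ} {f : Vec → ℝ} (h : PolyDeg n f) : ContDiff ℝ ⊤ f := by
  obtain ⟨p, -, hf⟩ := h
  have : f = fun x => MvPolynomial.eval x p := funext hf
  rw [this]
  induction p using MvPolynomial.induction_on generalizing f with
  | C a => simpa using contDiff_const
  | add p q hp hq => simpa using (hp (fun _ => rfl) rfl).add (hq (fun _ => rfl) rfl)
  | mul_X p i hp =>
    simpa using (hp (fun _ => rfl) rfl).mul (contDiff_apply ℝ ℝ i)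

lemma pd_diff {f : Vec → ℝ} (h : ContDiff ℝ ⊤ f) (i : Fin 3) : Differentiable ℝ (pd i f) := by
  have h1 : Differentiable ℝ (fderiv ℝ f) :=
    (h.fderiv_right (m := 1) (by exact le_top)).differentiable (by simp)
  unfold pd
  fun_prop

lemma pd_comm {f : Vec → ℝ} (h : ContDiff ℝ ⊤ f) (i j : Fin 3) (x : Vec) :
    pd i (pd j f) x = pd j (pd i f) x := by
  have h1 : Differentiable ℝ (fderiv ℝ f) :=
    (h.fderiv_right (m := 1) (by exact le_top)).differentiable (by simp)
  have e : ∀ a b : Fin 3, pd a (pd b f) x =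
      fderiv ℝ (fderiv ℝ f) x (Pi.single a 1) (Pi.single b 1) := by
    intro a b
    unfold pd
    rw [fderiv_clm_apply (h1 x) (by fun_prop)]
    simp
  rw [e, e]
  exact (h.contDiffAt.isSymmSndFDerivAt (by simp)) _ _

lemma Tetra.weights (T : Tetra) : ∃ w : Fin 4 → Vec →ᵃ[ℝ] ℝ,
    (∀ i j, w i (T.vtx j) = if i = j then (1 : ℝ) else 0) ∧
    (∀ x, ∑ i, w i x = 1) ∧ ∀ x, ∑ i, w i x • T.vtx i = x := by
  have htop : affineSpan ℝ (Set.range T.vtx) = ⊤ := by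
    rw [T.indep.affineSpan_eq_top_iff_card_eq_finrank_add_one]; simp
  let B : AffineBasis (Fin 4) ℝ Vec := ⟨T.vtx, T.indep, htop⟩
  refine ⟨B.coord, ?_, ?_, ?_⟩
  · intro i j
    exact B.coord_apply i j
  · intro x; exact B.sum_coord_apply_eq_one x
  · intro x; exact B.linear_combination_coord_eq_self x

lemma aff_of_affineMap (f : Vec →ᵃ[ℝ] ℝ) : ∃ d c, ⇑f = aff d c := by
  refine ⟨f 0, fun i => f.linear (Pi.single i 1), ?_⟩
  funext x
  have h : f x = f.linear x + f 0 := by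
    have := f.map_vadd 0 x; simpa using this
  have h2 := f.linear.pi_apply_eq_sum_univ x
  rw [h, h2, Fin.sum_univ_three]
  have e : ∀ i : Fin 3, (fun j => if i = j then (1:ℝ) else 0) = Pi.single i 1 := by
    intro i; funext j; simp [Pi.single_apply, eq_comm]
  simp only [e, aff, smul_eq_mul]; ring

lemma Tetra.exists_bubble (T : Tetra) : ∃ b, T.IsBubble b := by
  obtain ⟨w, h1, -, -⟩ := T.weights
  refine ⟨fun x => ∏ i, w i x, fun i => w i, ⟨fun i => ?_, h1⟩, fun _ => rfl⟩
  obtain ⟨d, c, h⟩ := aff_of_affineMap (w i)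
  change PolyDeg 1 (w i)
  rw [h]; exact polyDeg_aff d c

/-- an affine function vanishing at the vertices is zero. -/
lemma Tetra.aff_zero (T : Tetra) {d : ℝ} {c : Vec} (h : ∀ j, aff d c (T.vtx j) = 0) (x : Vec) :
    aff d c x = 0 := by
  obtain ⟨w, -, h2, h3⟩ := T.weights
  have e : aff d c x = ∑ i, w i x * aff d c (T.vtx i) := by
    conv_lhs => rw [← h3 x]
    have := h2 x
    simp only [Fin.sum_univ_four, aff, Pi.add_apply, Pi.smul_apply, smul_eq_mul] at *
    linear_combination (-d) * this
  rw [e]; simp [h]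

lemma aff_coeff {d : ℝ} {c : Vec} (h : ∀ x, aff d c x = 0) : d = 0 ∧ ∀ i, c i = 0 := by
  have h0 : d = 0 := by simpa [aff] using h 0
  refine ⟨h0, fun i => ?_⟩
  have := h (Pi.single i 1)
  fin_cases i <;> simpa [aff, h0] using this

lemma pd_comp (i a c : Fin 3) {f P Q b R : Vec → ℝ} (hf : Differentiable ℝ f)
    (hP : Differentiable ℝ P) (hQ : Differentiable ℝ Q) (hb : Differentiable ℝ b)
    (hR : Differentiable ℝ R) (x : Vec) :
    pd i (fun y => f y + (y a * P y - y c * Q y) + b y * R y) x =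
      pd i f x + (((if a = i then 1 else 0) * P x + x a * pd i P x)
        - ((if c = i then 1 else 0) * Q x + x c * pd i Q x))
      + (pd i b x * R x + b x * pd i R x) := by
  rw [pd_add' i (by fun_prop) (by fun_prop), pd_add' i (by fun_prop) (by fun_prop),
    pd_sub' i (by fun_prop) (by fun_prop), pd_mul' i (by fun_prop) (by fun_prop),
    pd_mul' i (by fun_prop) (by fun_prop), pd_mul' i (by fun_prop) (by fun_prop),
    pd_coord, pd_coord]

def Scoef (cp : Fin 3 → Vec) (i : Fin 3) : Vec :=
  fun j => (if i = j then cp 0 0 + cp 1 1 + cp 2 2 else 0) - 3 * cp i j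

def Ccoef (cr : Fin 3 → Vec) : Vec :=
  ![cr 2 1 - cr 1 2, cr 0 2 - cr 2 0, cr 1 0 - cr 0 1]

lemma curl_formula_s1 {q : Vec → ℝ} (hq : ContDiff ℝ ⊤ q) (dp : Vec) (cp : Fin 3 → Vec)
    {b : Vec → ℝ} (hb : Differentiable ℝ b) (dr : Vec) (cr : Fin 3 → Vec) (x : Vec) (i : Fin 3) :
    curl3 (fun y => grad3 q y + cross3 y (fun i => aff (dp i) (cp i) y)
      + b y • (fun i => aff (dr i) (cr i) y)) x i =
    aff (-2 * dp i) (Scoef cp i) x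
      + cross3 (fun j => pd j b x) (fun i => aff (dr i) (cr i) x) i + b x * Ccoef cr i := by
  have hc := pd_comm hq
  have hd := fun i => pd_diff hq i
  have h0 := fun j => pd_comp j 1 2 (hd 0) (aff_diff (dp 2) (cp 2)) (aff_diff (dp 1) (cp 1)) hb
    (aff_diff (dr 0) (cr 0)) x
  have h1 := fun j => pd_comp j 2 0 (hd 1) (aff_diff (dp 0) (cp 0)) (aff_diff (dp 2) (cp 2)) hb
    (aff_diff (dr 1) (cr 1)) x
  have h2 := fun j => pd_comp j 0 1 (hd 2) (aff_diff (dp 1) (cp 1)) (aff_diff (dp 0) (cp 0)) hb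
    (aff_diff (dr 2) (cr 2)) x
  simp only [pd_aff] at h0 h1 h2
  have c01 := hc 0 1 x
  have c02 := hc 0 2 x
  have c12 := hc 1 2 x
  fin_cases i
  · have e : curl3 (fun y => grad3 q y + cross3 y (fun i => aff (dp i) (cp i) y)
      + b y • (fun i => aff (dr i) (cr i) y)) x 0 = _ - _ := congrArg₂ (· - ·) (h2 1) (h1 2)
    refine e.trans ?_
    simp [cross3, Scoef, Ccoef, aff]
    linear_combination c12
  · have e : curl3 (fun y => grad3 q y + cross3 y (fun i => aff (dp i) (cp i) y)
      + b y • (fun i => aff (dr i) (cr i) y)) x 1 = _ - _ := congrArg₂ (· - ·) (h0 2) (h2 0)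
    refine e.trans ?_
    simp [cross3, Scoef, Ccoef, aff]
    linear_combination -c02
  · have e : curl3 (fun y => grad3 q y + cross3 y (fun i => aff (dp i) (cp i) y)
      + b y • (fun i => aff (dr i) (cr i) y)) x 2 = _ - _ := congrArg₂ (· - ·) (h1 0) (h0 1)
    refine e.trans ?_
    simp [cross3, Scoef, Ccoef, aff]
    linear_combination c01

lemma aff_comb {d : ℝ} {c : Vec} {μ : Fin 4 → ℝ} (h : ∑ m, μ m = 1) (v : Fin 4 → Vec) :
    aff d c (∑ m, μ m • v m) = ∑ m, μ m * aff d c (v m) := by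
  simp only [Fin.sum_univ_four, aff, Pi.add_apply, Pi.smul_apply, smul_eq_mul] at *
  linear_combination (-d) * h

lemma pd_bubble (dl : Fin 4 → ℝ) (cl : Fin 4 → Vec) (x : Vec) (j : Fin 3) :
    pd j (fun y => ∏ m, aff (dl m) (cl m) y) x =
      ∑ i, cl i j * ∏ m ∈ Finset.univ.erase i, aff (dl m) (cl m) x := by
  have hd := fun m => aff_diff (dl m) (cl m)
  have hd0 := hd 0
  have hd1 := hd 1
  have hd2 := hd 2
  have hd3 := hd 3
  simp only [Fin.prod_univ_four]
  rw [pd_mul' j (by fun_prop) (by fun_prop), pd_mul' j (by fun_prop) (by fun_prop),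
    pd_mul' j (by fun_prop) (by fun_prop)]
  simp only [pd_aff, Fin.sum_univ_four]
  have e0 : (Finset.univ.erase (0 : Fin 4)) = {1, 2, 3} := by decide
  have e1 : (Finset.univ.erase (1 : Fin 4)) = {0, 2, 3} := by decide
  have e2 : (Finset.univ.erase (2 : Fin 4)) = {0, 1, 3} := by decide
  have e3 : (Finset.univ.erase (3 : Fin 4)) = {0, 1, 2} := by decide
  rw [e0, e1, e2, e3]
  simp
  ring

def mu (i j m : Fin 4) : ℝ := if m = i then 0 else if m = j then 1 / 2 else 1 / 4

lemma mu_sum (i j : Fin 4) (h : j ≠ i) : ∑ m, mu i j m = 1 := by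
  fin_cases i <;> fin_cases j <;> simp [mu, Fin.sum_univ_four] at h ⊢ <;> norm_num

lemma mu_solve (i : Fin 4) (f : Fin 4 → ℝ) (H : ∀ j, j ≠ i → ∑ m, mu i j m * f m = 0) :
    ∀ j, j ≠ i → f j = 0 := by
  intro j hj
  have H0 := H 0
  have H1 := H 1
  have H2 := H 2
  have H3 := H 3
  fin_cases i <;> fin_cases j <;> simp [mu, Fin.sum_univ_four] at hj H0 H1 H2 H3 ⊢ <;> linarith

lemma cross_parallel {n r : Vec} (h : cross3 n r = 0) (w : Vec) (a : Fin 3) :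
    n a * dot3 r w = r a * dot3 n w := by
  have h0 : n 1 * r 2 - n 2 * r 1 = 0 := congrFun h 0
  have h1 : n 2 * r 0 - n 0 * r 2 = 0 := congrFun h 1
  have h2 : n 0 * r 1 - n 1 * r 0 = 0 := congrFun h 2
  simp only [dot3, Fin.sum_univ_three]
  fin_cases a <;> simp
  · linear_combination w 1 * h2 - w 2 * h1
  · linear_combination w 2 * h0 - w 0 * h2
  · linear_combination w 0 * h1 - w 1 * h0

lemma main_zero (T : Tetra) {q : Vec → ℝ} (hq : ContDiff ℝ ⊤ q) (dp : Vec) (cp : Fin 3 → Vec)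
    (dl : Fin 4 → ℝ) (cl : Fin 4 → Vec)
    (hl : ∀ i j, aff (dl i) (cl i) (T.vtx j) = if i = j then (1 : ℝ) else 0)
    (dr : Vec) (cr : Fin 3 → Vec)
    (hK : ∀ x ∈ T.K, curl3 (fun y => grad3 q y + cross3 y (fun i => aff (dp i) (cp i) y)
      + (∏ m, aff (dl m) (cl m) y) • (fun i => aff (dr i) (cr i) y)) x = 0) :
    (∀ x, cross3 x (fun i => aff (dp i) (cp i) x) = 0) ∧ ∀ i x, aff (dr i) (cr i) x = 0 := by
  have hb : Differentiable ℝ (fun y => ∏ m, aff (dl m) (cl m) y) := by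
    have hd := fun m => aff_diff (dl m) (cl m)
    have hd0 := hd 0
    have hd1 := hd 1
    have hd2 := hd 2
    have hd3 := hd 3
    simp only [Fin.prod_univ_four]
    fun_prop
  have hF : ∀ x ∈ T.K, ∀ i, aff (-2 * dp i) (Scoef cp i) x
      + cross3 (fun j => pd j (fun y => ∏ m, aff (dl m) (cl m) y) x)
        (fun i => aff (dr i) (cr i) x) i + (∏ m, aff (dl m) (cl m) x) * Ccoef cr i = 0 := by
    intro x hx i
    rw [← curl_formula_s1 hq dp cp hb dr cr x i, hK x hx]; rfl
  -- vertices
  have hS : ∀ i x, aff (-2 * dp i) (Scoef cp i) x = 0 := by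
    intro i
    apply T.aff_zero
    intro j
    have h1 := hF (T.vtx j) (subset_convexHull ℝ _ ⟨j, rfl⟩) i
    have h2 : (∏ m, aff (dl m) (cl m) (T.vtx j)) = 0 := by
      simp only [hl]
      fin_cases j <;> simp [Fin.prod_univ_four]
    have h3 : (fun a => pd a (fun y => ∏ m, aff (dl m) (cl m) y) (T.vtx j)) = 0 := by
      funext a
      rw [pd_bubble]
      simp only [hl]
      apply Finset.sum_eq_zero
      intro i _
      have : ∃ m, m ≠ i ∧ m ≠ j := by
        have : ∀ i j : Fin 4, ∃ m, m ≠ i ∧ m ≠ j := by decide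
        exact this i j
      obtain ⟨m, hm1, hm2⟩ := this
      rw [Finset.prod_eq_zero (i := m)] <;> simp [hm1, hm2]
    rw [h2, h3] at h1
    have h4 : ∀ r : Vec, cross3 0 r i = 0 := by
      intro r; fin_cases i <;> simp [cross3]
    simpa [h4] using h1
  have hSc := fun i => aff_coeff (hS i)
  constructor
  · have hd : ∀ i, dp i = 0 := fun i => by have := (hSc i).1; linarith
    have hc : ∀ i j, cp i j = if i = j then (cp 0 0 + cp 1 1 + cp 2 2) / 3 else 0 := by
      intro i j
      have := (hSc i).2 j
      simp only [Scoef] at this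
      split_ifs at this ⊢ <;> linarith
    have hp : ∀ i x, aff (dp i) (cp i) x = (cp 0 0 + cp 1 1 + cp 2 2) / 3 * x i := by
      intro i x
      generalize (cp 0 0 + cp 1 1 + cp 2 2) / 3 = t at hc
      simp only [aff, hd, hc]
      fin_cases i <;> simp
    intro x
    simp only [hp]
    funext a
    fin_cases a <;> simp [cross3] <;> ring
  -- faces
  have hface : ∀ i j, j ≠ i → ∀ a, cross3 (cl i)
      (fun a => aff (dr a) (cr a) (∑ m, mu i j m • T.vtx m)) a = 0 := by
    intro i j hij a
    have hs := mu_sum i j hij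
    set x := ∑ m, mu i j m • T.vtx m with hx
    have hxK : x ∈ T.K := by
      refine (convex_convexHull ℝ _).sum_mem (fun m _ => ?_) hs
        (fun m _ => subset_convexHull ℝ _ ⟨m, rfl⟩)
      unfold mu; split_ifs <;> norm_num
    have hlx : ∀ m, aff (dl m) (cl m) x = mu i j m := by
      intro m
      rw [hx, aff_comb hs]
      simp [hl]
    have h1 := hF x hxK a
    rw [hS, Finset.prod_eq_zero (Finset.mem_univ i) (by rw [hlx]; simp [mu])] at h1
    have h3 : (fun a => pd a (fun y => ∏ m, aff (dl m) (cl m) y) x) =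
        fun a => cl i a * ∏ m ∈ Finset.univ.erase i, mu i j m := by
      funext a
      rw [pd_bubble]
      simp only [hlx]
      apply Finset.sum_eq_single i
      · intro i' _ hi'
        rw [Finset.prod_eq_zero (i := i)]
        · simp
        · simpa using hi'.symm
        · simp [mu]
      · simp
    have hne : ∏ m ∈ Finset.univ.erase i, mu i j m ≠ 0 := by
      rw [Finset.prod_ne_zero_iff]
      intro m hm
      have : m ≠ i := by simpa using hm
      unfold mu; rw [if_neg this]; split_ifs <;> norm_num
    rw [h3] at h1
    generalize (∏ m ∈ Finset.univ.erase i, mu i j m) = t at h1 hne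
    apply mul_left_cancel₀ hne
    rw [mul_zero]
    refine Eq.trans ?_ h1
    fin_cases a <;> simp [cross3] <;> ring
  have hvert : ∀ i j, j ≠ i → cross3 (cl i) (fun a => aff (dr a) (cr a) (T.vtx j)) = 0 := by
    intro i j hij
    funext a
    refine mu_solve i (fun m => cross3 (cl i) (fun a => aff (dr a) (cr a) (T.vtx m)) a) ?_ j hij
    intro j hj
    rw [← hface i j hj a]
    have e := fun a => aff_comb (d := dr a) (c := cr a) (mu_sum i j hj) T.vtx
    simp only [e]
    fin_cases a <;> simp [cross3, Fin.sum_univ_four] <;> ring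
  intro a
  apply T.aff_zero
  intro j
  have hd : ∀ i m n, dot3 (cl i) (T.vtx m - T.vtx n) =
      (if i = m then (1 : ℝ) else 0) - (if i = n then (1 : ℝ) else 0) := by
    intro i m n
    rw [← hl i m, ← hl i n]
    simp [dot3, aff, Fin.sum_univ_three]; ring
  obtain ⟨i, k, hi, hk, hik⟩ : ∃ i k : Fin 4, j ≠ i ∧ j ≠ k ∧ i ≠ k := by
    revert j; decide
  have p1 := cross_parallel (hvert i j hi) (T.vtx k - T.vtx j)
  have p2 := cross_parallel (hvert k j hk) (T.vtx k - T.vtx j)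
  rw [hd] at p1 p2
  simp only [hik, hi.symm, hk.symm, if_true, if_false, sub_self, mul_zero, sub_zero, mul_one,
    mul_eq_zero] at p1 p2
  have hr : dot3 (fun a => aff (dr a) (cr a) (T.vtx j)) (T.vtx k - T.vtx j) = 0 := by
    by_contra hne
    have h0 : ∀ a, cl i a = 0 := fun a => (p1 a).resolve_right hne
    have := hd i i j
    simp [dot3, h0, hi.symm] at this
  have := p2 a
  rw [hr] at this
  simpa using this.symm

/-- For `k = 1,2` and a tetrahedron `K`, the kernel of `curl` in
`W_k(K) = ∇P_{k+1}(K) ⊕ x × P₁(K;ℝ³) ⊕ b_K·P₁(K;ℝ³)` is exactly `∇P_{k+1}(K)`. -/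
theorem statement1 (k : ℕ) (hk : k = 1 ∨ k = 2) (T : Tetra) :
    {v : Vec → Vec | MemW k T v ∧ ∀ x ∈ T.K, curl3 v x = 0}
      = {v : Vec → Vec | ∃ q, PolyDeg (k + 1) q ∧ ∀ x, v x = grad3 q x} := by
  ext v
  simp only [Set.mem_ofPred_eq]
  constructor
  · rintro ⟨⟨q, p, r, b, ⟨lam, ⟨hlam, hl⟩, hb⟩, hq, hp, hr, hv⟩, hK⟩
    refine ⟨q, hq, ?_⟩
    choose dl cl hlc using fun i => aff_of_polyDeg (hlam i)
    choose dp cp hpc using fun i => aff_of_polyDeg (hp i)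
    choose dr cr hrc using fun i => aff_of_polyDeg (hr i)
    have hp' : ∀ x, p x = fun i => aff (dp i) (cp i) x := fun x =>
      funext fun i => congrFun (hpc i) x
    have hr' : ∀ x, r x = fun i => aff (dr i) (cr i) x := fun x =>
      funext fun i => congrFun (hrc i) x
    simp only [hlc] at hl hb
    have hv' : v = fun y => grad3 q y + cross3 y (fun i => aff (dp i) (cp i) y)
      + (∏ m, aff (dl m) (cl m) y) • (fun i => aff (dr i) (cr i) y) := by
      funext y
      rw [hv, hp', hr', hb]
    rw [hv'] at hK
    obtain ⟨h1, h2⟩ := main_zero T (polyDeg_contDiff hq) dp cp dl cl hl dr cr hK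
    intro x
    rw [hv']
    simp only [h1, h2]
    funext i
    simp
  · rintro ⟨q, hq, hv⟩
    obtain ⟨b, hb⟩ := T.exists_bubble
    have h0 : VPolyDeg 1 (fun _ => (0 : Vec)) := fun i => ⟨0, by simp, by simp⟩
    refine ⟨⟨q, fun _ => 0, fun _ => 0, b, hb, hq, h0, h0, ?_⟩, ?_⟩
    · intro x
      rw [hv]
      funext i
      fin_cases i <;> simp [cross3] <;> rfl
    · intro x _
      have hc := pd_comm (polyDeg_contDiff hq)
      have e : v = fun y => grad3 q y := funext hv
      rw [e]
      funext i
      have hh : ∀ a b : Fin 3, pd a (fun y => grad3 q y b) x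
          - pd b (fun y => grad3 q y a) x = 0 := fun a b => sub_eq_zero.2 (hc a b x)
      fin_cases i
      · exact hh 1 2
      · exact hh 2 0
      · exact hh 0 1
end
end
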